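/- Let 1 < q < 2 and let u : ℝ × (0,∞) → ℝ be a smooth, strictly positive solution of u_t − u_{xx} + (1/q)(u^q)_x = 0 on ℝ × (0,∞). Then the entropy inequality ∂_x(u(x,t)^{q−1}) ≤ 1/t holds for all x ∈ ℝ and t > 0. Consequently, if in addition u(·,t) ∈ L¹(ℝ) with ∫_ℝ u(x,t) dx = M for all t > 0, then 0 < u(x,t) ≤ (qM/((q−1)t))^{1/q} for all x ∈ ℝ and t > 0. -/

import Mathlib

open MeasureTheory Real Filter Topology

noncomputable section

def DX (F : ℝ × ℝ → ℝ) (p : ℝ × ℝ) : ℝ := fderiv ℝ F p (0, 1)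
def DT (F : ℝ × ℝ → ℝ) (p : ℝ × ℝ) : ℝ := fderiv ℝ F p (1, 0)
def Om : Set (ℝ × ℝ) := Set.Ioi 0 ×ˢ Set.univ
def Sm (F : ℝ × ℝ → ℝ) : Prop := ContDiffOn ℝ (⊤ : ℕ∞) F Om

lemma Om_open : IsOpen Om := isOpen_Ioi.prod isOpen_univ

lemma Sm.cda {F : ℝ × ℝ → ℝ} (hF : Sm F) {p : ℝ × ℝ} (hp : p ∈ Om) :
    ContDiffAt ℝ (⊤ : ℕ∞) F p := hF.contDiffAt (Om_open.mem_nhds hp)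

lemma Sm.diff {F : ℝ × ℝ → ℝ} (hF : Sm F) {p : ℝ × ℝ} (hp : p ∈ Om) :
    DifferentiableAt ℝ F p := (hF.cda hp).differentiableAt (by simp)

lemma Sm.fd {F : ℝ × ℝ → ℝ} (hF : Sm F) : ContDiffOn ℝ (⊤ : ℕ∞) (fderiv ℝ F) Om :=
  hF.fderiv_of_isOpen Om_open (by simp)

lemma Sm.dx {F : ℝ × ℝ → ℝ} (hF : Sm F) : Sm (DX F) :=
  hF.fd.clm_apply contDiffOn_const

lemma Sm.dt {F : ℝ × ℝ → ℝ} (hF : Sm F) : Sm (DT F) :=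
  hF.fd.clm_apply contDiffOn_const

lemma Sm.comm {F : ℝ × ℝ → ℝ} (hF : Sm F) {p : ℝ × ℝ} (hp : p ∈ Om) :
    DT (DX F) p = DX (DT F) p := by
  have hs : IsSymmSndFDerivAt ℝ F p :=
    (hF.cda hp).isSymmSndFDerivAt (by simp only [minSmoothness_of_isRCLikeNormedField]; exact WithTop.coe_le_coe.2 le_top)
  have hd : DifferentiableAt ℝ (fderiv ℝ F) p :=
    (hF.fd.contDiffAt (Om_open.mem_nhds hp)).differentiableAt (by simp)
  have h := hs (1, 0) (0, 1)
  unfold DT DX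
  rw [fderiv_clm_apply hd (by fun_prop), fderiv_clm_apply hd (by fun_prop)]
  simpa using h

lemma Sm.hx {F : ℝ × ℝ → ℝ} (hF : Sm F) {t : ℝ} (ht : 0 < t) (x : ℝ) :
    HasDerivAt (fun z => F (t, z)) (DX F (t, x)) x := by
  have h := (hF.diff (p := (t, x)) ⟨ht, trivial⟩).hasFDerivAt
  exact h.comp_hasDerivAt x ((hasDerivAt_const x t).prodMk (hasDerivAt_id x))

lemma Sm.ht {F : ℝ × ℝ → ℝ} (hF : Sm F) {t : ℝ} (ht : 0 < t) (x : ℝ) :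
    HasDerivAt (fun τ => F (τ, x)) (DT F (t, x)) t := by
  have h := (hF.diff (p := (t, x)) ⟨ht, trivial⟩).hasFDerivAt
  exact h.comp_hasDerivAt t ((hasDerivAt_id t).prodMk (hasDerivAt_const t x))

/-- The equation satisfied by `V = u^(q-1)`. -/
lemma V_eq (q : ℝ) (hq1 : 1 < q) (u : ℝ → ℝ → ℝ)
    (hsmooth : Sm (fun p : ℝ × ℝ => u p.1 p.2))
    (hpos : ∀ t : ℝ, 0 < t → ∀ x : ℝ, 0 < u t x)
    (hpde : ∀ t : ℝ, 0 < t → ∀ x : ℝ,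
      HasDerivAt (fun τ => u τ x)
        (deriv (deriv (u t)) x - (1 / q) * deriv (fun z => u t z ^ q) x) t)
    (V : ℝ × ℝ → ℝ) (hVd : V = fun p => u p.1 p.2 ^ (q - 1)) :
    Sm V ∧ ∀ t : ℝ, 0 < t → ∀ x : ℝ, DT V (t, x) = DX (DX V) (t, x)
      + (2 - q) / (q - 1) * DX V (t, x) ^ 2 / V (t, x) - V (t, x) * DX V (t, x) := by
  have hV : Sm V := by
    intro p hp
    rw [hVd]
    exact (hsmooth p hp).rpow_const_of_ne (hpos p.1 hp.1 p.2).ne'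
  refine ⟨hV, ?_⟩
  set U : ℝ × ℝ → ℝ := fun p => u p.1 p.2 with hU
  have pw : ∀ t : ℝ, 0 < t → ∀ x : ℝ, ∀ r : ℝ, u t x ^ (r - 1) = u t x ^ r / u t x := by
    intro t ht x r
    rw [rpow_sub (hpos t ht x), rpow_one]
  have hVx : ∀ t : ℝ, 0 < t → ∀ x : ℝ,
      DX V (t, x) = (q - 1) * V (t, x) * DX U (t, x) / u t x := by
    intro t ht x
    have h1 := (hsmooth.hx ht x).rpow_const (p := q - 1) (Or.inl (hpos t ht x).ne')
    have h2 := hV.hx ht x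
    rw [hVd] at h2 ⊢
    rw [h2.unique h1, pw t ht x]
    simp only [hU]
    ring
  have hVt : ∀ t : ℝ, 0 < t → ∀ x : ℝ,
      DT V (t, x) = (q - 1) * V (t, x) * DT U (t, x) / u t x := by
    intro t ht x
    have h1 := (hsmooth.ht ht x).rpow_const (p := q - 1) (Or.inl (hpos t ht x).ne')
    have h2 := hV.ht ht x
    rw [hVd] at h2 ⊢
    rw [h2.unique h1, pw t ht x]
    simp only [hU]
    ring
  intro t ht x
  have hu : 0 < u t x := hpos t ht x
  have hVp : 0 < V (t, x) := by rw [hVd]; exact rpow_pos_of_pos hu _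
  have hxx : DX (DX V) (t, x) = (((q - 1) * DX V (t, x) * DX U (t, x)
      + (q - 1) * V (t, x) * DX (DX U) (t, x)) * u t x
      - (q - 1) * V (t, x) * DX U (t, x) * DX U (t, x)) / u t x ^ 2 := by
    have h1 := hV.dx.hx ht x
    have h2 : HasDerivAt (fun z => (q - 1) * V (t, z) * DX U (t, z) / u t z) _ x :=
      (((hV.hx ht x).const_mul (q - 1)).mul (hsmooth.dx.hx ht x)).div (hsmooth.hx ht x) hu.ne'
    have h3 : (fun z => DX V (t, z)) = fun z => (q - 1) * V (t, z) * DX U (t, z) / u t z := by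
      funext z; exact hVx t ht z
    rw [h3] at h1
    exact h1.unique h2
  have hut : DT U (t, x) = DX (DX U) (t, x) - V (t, x) * DX U (t, x) := by
    have h1 := (hsmooth.ht ht x).unique (hpde t ht x)
    have e1 : deriv (u t) = fun z => DX U (t, z) := by
      funext z; exact (hsmooth.hx ht z).deriv
    have e2 : deriv (deriv (u t)) x = DX (DX U) (t, x) := by
      rw [e1]; exact (hsmooth.dx.hx ht x).deriv
    have e3 : deriv (fun z => u t z ^ q) x = DX U (t, x) * q * u t x ^ (q - 1) :=
      ((hsmooth.hx ht x).rpow_const (p := q) (Or.inl hu.ne')).deriv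
    rw [h1, e2, e3, hVd]
    have : q ≠ 0 := by linarith
    field_simp
  have hq : q - 1 ≠ 0 := by linarith
  rw [hVt t ht x, hxx, hut, hVx t ht x]
  field_simp
  ring

lemma W_eq (a : ℝ) (V : ℝ × ℝ → ℝ) (hV : Sm V) (hp : ∀ t : ℝ, 0 < t → ∀ x, 0 < V (t, x))
    (hE : ∀ t : ℝ, 0 < t → ∀ x : ℝ, DT V (t, x) = DX (DX V) (t, x)
      + a * DX V (t, x) ^ 2 / V (t, x) - V (t, x) * DX V (t, x))
    (t : ℝ) (ht : 0 < t) (x : ℝ) :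
    DT (DX V) (t, x) = DX (DX (DX V)) (t, x)
      + 2 * a * DX V (t, x) * DX (DX V) (t, x) / V (t, x)
      - a * DX V (t, x) ^ 3 / V (t, x) ^ 2 - DX V (t, x) ^ 2 - V (t, x) * DX (DX V) (t, x) := by
  rw [hV.comm (p := (t, x)) ⟨ht, trivial⟩]
  have h1 := hV.dt.hx ht x
  have h3 : (fun z => DT V (t, z)) = fun z => DX (DX V) (t, z)
      + a * DX V (t, z) ^ 2 / V (t, z) - V (t, z) * DX V (t, z) := by
    funext z; exact hE t ht z
  rw [h3] at h1
  have hv := hp t ht x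
  have h2 : HasDerivAt (fun z => DX (DX V) (t, z)
      + a * DX V (t, z) ^ 2 / V (t, z) - V (t, z) * DX V (t, z)) _ x :=
    ((hV.dx.dx.hx ht x).add ((((hV.dx.hx ht x).pow 2).const_mul a).div (hV.hx ht x) hv.ne')).sub
      ((hV.hx ht x).mul (hV.dx.hx ht x))
  rw [h1.unique h2]
  simp
  field_simp
  ring

lemma alg (m v w s k e κ h1 h2 : ℝ) (hm : 0 < m) (hv : 0 < v) (hs : 0 < s) (he : 0 < e)
    (hk : e ≤ k) (hκ : 0 < κ) (hw : s + (1 + v) * k ^ 2 < w) (hh1 : |h1| ≤ κ * k ^ 3)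
    (hh2 : |h2| ≤ κ * k ^ 4) (hκ' : κ * ((m ^ 2 + 1) / m + 1 + 1 / e) < 1) :
    m ^ 2 * w ^ 2 * k ^ 2 / v + 2 * w * h1 + (1 + v) * h2
      + (2 * m ^ 2 * w / v - v) * (1 + v) * h1 < w ^ 2 + m ^ 2 * w ^ 3 / v ^ 2 - s ^ 2 := by
  have hk0 : 0 < k := he.trans_le hk
  have hw1 : (1 + v) * k ^ 2 < w := by linarith
  have hw0 : 0 < w := lt_trans (by positivity) hw1
  set G := k ^ 2 * w * (1 + v) + m ^ 2 * w ^ 2 * k ^ 2 / v ^ 2 with hG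
  have hGp : 0 < G := by positivity
  have g1 : G ≤ w ^ 2 + m ^ 2 * w ^ 3 / v ^ 2 - s ^ 2 - m ^ 2 * w ^ 2 * k ^ 2 / v := by
    have a1 : k ^ 2 * w * (1 + v) ≤ w ^ 2 - s ^ 2 := by
      have e1 : (1 + v) * k ^ 2 * w ≤ (w - s) * w := by gcongr; linarith
      have e2 : s < w := lt_trans (lt_add_of_pos_right s (by positivity)) hw
      nlinarith
    have a2 : m ^ 2 * w ^ 2 * k ^ 2 / v ^ 2 + m ^ 2 * w ^ 2 * k ^ 2 / v ≤ m ^ 2 * w ^ 3 / v ^ 2 := by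
      have : m ^ 2 * w ^ 2 * k ^ 2 / v ^ 2 + m ^ 2 * w ^ 2 * k ^ 2 / v
        = m ^ 2 * w ^ 2 / v ^ 2 * ((1 + v) * k ^ 2) := by field_simp
      rw [this]
      have : m ^ 2 * w ^ 3 / v ^ 2 = m ^ 2 * w ^ 2 / v ^ 2 * w := by field_simp
      rw [this]
      gcongr
    linarith
  have b1 : (1 + v) * k ^ 4 ≤ G := by
    have : (1 + v) * k ^ 4 ≤ k ^ 2 * w * (1 + v) := by
      have : (1 + v) * k ^ 4 = k ^ 2 * ((1 + v) * k ^ 2) := by ring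
      rw [this]
      have : k ^ 2 * ((1 + v) * k ^ 2) ≤ k ^ 2 * w := by gcongr
      have : 0 ≤ k ^ 2 * w * v := by positivity
      linarith
    have : 0 ≤ m ^ 2 * w ^ 2 * k ^ 2 / v ^ 2 := by positivity
    linarith
  have b2 : v * (1 + v) * k ^ 3 ≤ 1 / e * G := by
    have : v * (1 + v) * k ^ 3 ≤ 1 / e * (k ^ 2 * w * (1 + v)) := by
      have c1 : v * (1 + v) * k ^ 3 * e ≤ k ^ 2 * w * (1 + v) := by
        calc v * (1 + v) * k ^ 3 * e ≤ v * (1 + v) * k ^ 3 * k := by gcongr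
          _ = v * k ^ 2 * ((1 + v) * k ^ 2) := by ring
          _ ≤ v * k ^ 2 * w := by gcongr
          _ ≤ k ^ 2 * w * (1 + v) := by nlinarith [show 0 < k ^ 2 * w by positivity]
      rw [one_div, inv_mul_eq_div, le_div_iff₀ he]
      exact c1
    have h0 : 0 ≤ 1 / e * (m ^ 2 * w ^ 2 * k ^ 2 / v ^ 2) := by positivity
    rw [hG, mul_add]
    linarith
  have b3 : 2 * m ^ 2 * w / v * (1 + v) * k ^ 3 + 2 * w * k ^ 3 ≤ (m ^ 2 + 1) / m * G := by
    have c1 : 2 * m ^ 2 * w / v * (1 + v) * k ^ 3 + 2 * w * k ^ 3 ≤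
        2 * (m ^ 2 + 1) * w * (1 + v) * k ^ 3 / v := by
      have : 2 * (m ^ 2 + 1) * w * (1 + v) * k ^ 3 / v -
        (2 * m ^ 2 * w / v * (1 + v) * k ^ 3 + 2 * w * k ^ 3) = 2 * w * k ^ 3 / v := by
        field_simp; ring
      have : 0 ≤ 2 * w * k ^ 3 / v := by positivity
      linarith
    have c2 : k ^ 2 * w * (1 + v) * (2 * m * (k / v)) ≤ G := by
      calc k ^ 2 * w * (1 + v) * (2 * m * (k / v))
          ≤ k ^ 2 * w * (1 + v) * (1 + m ^ 2 * (k / v) ^ 2) := by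
            gcongr
            nlinarith [sq_nonneg (1 - m * (k / v))]
        _ = k ^ 2 * w * (1 + v) + m ^ 2 * w * ((1 + v) * k ^ 2) * k ^ 2 / v ^ 2 := by
            field_simp
        _ ≤ k ^ 2 * w * (1 + v) + m ^ 2 * w * w * k ^ 2 / v ^ 2 := by gcongr
        _ = G := by rw [hG]; ring
    calc _ ≤ 2 * (m ^ 2 + 1) * w * (1 + v) * k ^ 3 / v := c1
      _ = (m ^ 2 + 1) / m * (k ^ 2 * w * (1 + v) * (2 * m * (k / v))) := by field_simp
      _ ≤ _ := by gcongr
  have d1 : 2 * w * h1 ≤ 2 * w * (κ * k ^ 3) := by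
    gcongr; exact (le_abs_self _).trans hh1
  have d2 : (1 + v) * h2 ≤ (1 + v) * (κ * k ^ 4) := by
    gcongr; exact (le_abs_self _).trans hh2
  have d3 : 2 * m ^ 2 * w / v * (1 + v) * h1 ≤ 2 * m ^ 2 * w / v * (1 + v) * (κ * k ^ 3) := by
    gcongr; exact (le_abs_self _).trans hh1
  have d4 : v * (1 + v) * (-h1) ≤ v * (1 + v) * (κ * k ^ 3) := by
    gcongr; exact (neg_le_abs _).trans hh1
  have f1 : κ * ((1 + v) * k ^ 4 + v * (1 + v) * k ^ 3 +
      (2 * m ^ 2 * w / v * (1 + v) * k ^ 3 + 2 * w * k ^ 3)) ≤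
      κ * (G + 1 / e * G + (m ^ 2 + 1) / m * G) := by gcongr
  have f2 : κ * (G + 1 / e * G + (m ^ 2 + 1) / m * G) < G := by
    have : κ * (G + 1 / e * G + (m ^ 2 + 1) / m * G)
      = κ * ((m ^ 2 + 1) / m + 1 + 1 / e) * G := by ring
    rw [this]
    nlinarith
  nlinarith

lemma snd_test (f f' : ℝ → ℝ) (c x : ℝ) (hm : IsLocalMax f x)
    (hf : ∀ᶠ z in 𝓝 x, HasDerivAt f (f' z) z) (hc : HasDerivAt f' c x) : c ≤ 0 := by
  by_contra! h
  have e1 : deriv f =ᶠ[𝓝 x] f' := hf.mono fun z hz => hz.deriv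
  have e2 : deriv (deriv f) x = c := by rw [e1.deriv_eq]; exact hc.deriv
  have hmin : IsLocalMin f x := isLocalMin_of_deriv_deriv_pos (by rw [e2]; exact h)
    hm.deriv_eq_zero hf.self_of_nhds.continuousAt
  have e3 : f =ᶠ[𝓝 x] fun _ => f x := by
    filter_upwards [hm, hmin] with z h1 h2 using le_antisymm h1 h2
  have e4 := e3.deriv.deriv_eq
  simp at e4
  linarith

lemma fst_test (f : ℝ → ℝ) (c t : ℝ) (hm : ∀ᶠ z in 𝓝[<] t, f z ≤ f t)
    (hc : HasDerivAt f c t) : 0 ≤ c := by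
  have h := (hasDerivWithinAt_iff_tendsto_slope' (by simp)).1 (hc.hasDerivWithinAt (s := Set.Iio t))
  refine ge_of_tendsto h ?_
  filter_upwards [hm, self_mem_nhdsWithin] with z h1 h2
  rw [slope_def_field]
  exact div_nonneg_of_nonpos (by linarith) (by have : z < t := h2; linarith)

lemma barrier_deriv (e L x0 x : ℝ) (hρ : 1 - (L * (x - x0)) ^ 2 ≠ 0) :
    HasDerivAt (fun z => (e / (1 - (L * (z - x0)) ^ 2)) ^ 2)
      (4 * e ^ 2 * L * (L * (x - x0)) / (1 - (L * (x - x0)) ^ 2) ^ 3) x := by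
  have h0 : HasDerivAt (fun z => 1 - (L * (z - x0)) ^ 2) _ x :=
    ((((hasDerivAt_id x).sub_const x0).const_mul L).pow 2).const_sub 1
  have h1 : HasDerivAt (fun z => (e / (1 - (L * (z - x0)) ^ 2)) ^ 2) _ x :=
    ((hasDerivAt_const x e).div h0 hρ).pow 2
  refine h1.congr_deriv ?_
  simp
  field_simp
  ring

lemma barrier_deriv2 (e L x0 x : ℝ) (hρ : 1 - (L * (x - x0)) ^ 2 ≠ 0) :
    HasDerivAt (fun z => 4 * e ^ 2 * L * (L * (z - x0)) / (1 - (L * (z - x0)) ^ 2) ^ 3)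
      (24 * e ^ 2 * L ^ 2 * (L * (x - x0)) ^ 2 / (1 - (L * (x - x0)) ^ 2) ^ 4
        + 4 * e ^ 2 * L ^ 2 / (1 - (L * (x - x0)) ^ 2) ^ 3) x := by
  have h0 : HasDerivAt (fun z => 1 - (L * (z - x0)) ^ 2) _ x :=
    ((((hasDerivAt_id x).sub_const x0).const_mul L).pow 2).const_sub 1
  have h1 : HasDerivAt (fun z => 4 * e ^ 2 * L * (L * (z - x0)) / (1 - (L * (z - x0)) ^ 2) ^ 3) _ x :=
    ((((hasDerivAt_id x).sub_const x0).const_mul L).const_mul (4 * e ^ 2 * L)).div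
    (h0.pow 3) (pow_ne_zero 3 hρ)
  refine h1.congr_deriv ?_
  simp
  field_simp
  ring

set_option maxHeartbeats 2000000 in
lemma key (m : ℝ) (hm : 0 < m) (V : ℝ × ℝ → ℝ) (hV : Sm V)
    (hp : ∀ t : ℝ, 0 < t → ∀ x, 0 < V (t, x))
    (hE : ∀ t : ℝ, 0 < t → ∀ x : ℝ, DT V (t, x) = DX (DX V) (t, x)
      + m ^ 2 * DX V (t, x) ^ 2 / V (t, x) - V (t, x) * DX V (t, x))
    (δ T x0 e : ℝ) (hδ : 0 < δ) (hT : δ < T) (he : 0 < e) :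
    DX V (T, x0) ≤ 1 / (T - δ) + (1 + V (T, x0)) * e ^ 2 := by
  obtain ⟨κ, hκ, hκ'⟩ : ∃ κ : ℝ, 0 < κ ∧ κ * ((m ^ 2 + 1) / m + 1 + 1 / e) < 1 := by
    have : 0 < (m ^ 2 + 1) / m + 1 + 1 / e := by positivity
    refine ⟨1 / (2 * ((m ^ 2 + 1) / m + 1 + 1 / e)), by positivity, ?_⟩
    rw [one_div, mul_inv, mul_assoc, inv_mul_cancel₀ this.ne']
    norm_num
  obtain ⟨L, hL, hLe, hLκ⟩ : ∃ L : ℝ, 0 < L ∧ L ≤ e ∧ 28 * L ≤ κ * e := by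
    refine ⟨min e (κ * e / 28), by positivity, min_le_left _ _, ?_⟩
    have := min_le_right e (κ * e / 28)
    linarith
  by_contra! hcon
  obtain ⟨C, hC0, hC⟩ : ∃ C : ℝ, 0 < C ∧ ∀ t x : ℝ, δ ≤ t → t ≤ T → (L * (x - x0)) ^ 2 ≤ 1 →
      DX V (t, x) ≤ C := by
    have hcomp : IsCompact (Set.Icc δ T ×ˢ Set.Icc (x0 - 1 / L) (x0 + 1 / L)) :=
      isCompact_Icc.prod isCompact_Icc
    obtain ⟨C, hC⟩ := hcomp.exists_bound_of_continuousOn (f := DX V)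
      (hV.dx.continuousOn.mono fun p hp => ⟨hδ.trans_le hp.1.1, trivial⟩)
    refine ⟨max C 1, by positivity, fun t x h1 h2 h3 => ?_⟩
    refine (le_abs_self _).trans ((hC (t, x) ⟨⟨h1, h2⟩, ?_⟩).trans (le_max_left _ _))
    have h4 := abs_le.1 ((sq_le_one_iff_abs_le_one _).1 h3)
    have e1 : L * (1 / L) = 1 := by field_simp
    constructor
    · by_contra! h
      have := mul_lt_mul_of_pos_left h hL
      simp only at this
      nlinarith
    · by_contra! h
      have := mul_lt_mul_of_pos_left h hL
      simp only at this
      nlinarith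
  set F : ℝ × ℝ → ℝ := fun p => DX V p -
    (1 / (p.1 - δ) + (1 + V p) * (e / (1 - (L * (p.2 - x0)) ^ 2)) ^ 2) with hF
  have claim : ∀ t x : ℝ, δ < t → t ≤ T → (L * (x - x0)) ^ 2 < 1 → 0 < F (t, x) →
      δ + 1 / C < t ∧ (L * (x - x0)) ^ 2 < 1 - e ^ 2 / C := by
    intro t x h1 h2 h3 h4
    have hW := hC t x h1.le h2 h3.le
    have ht : 0 < t - δ := by linarith
    have hρ : 0 < 1 - (L * (x - x0)) ^ 2 := by linarith
    have hv := hp t (hδ.trans h1) x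
    simp only [hF] at h4
    set ρ := 1 - (L * (x - x0)) ^ 2 with hρd
    have hρ1 : ρ ≤ 1 := by rw [hρd]; nlinarith [sq_nonneg (L * (x - x0))]
    have q1 : 0 < 1 / (t - δ) := by positivity
    have q2 : 0 < (e / ρ) ^ 2 := by positivity
    have q3 : 0 < V (t, x) * (e / ρ) ^ 2 := by positivity
    constructor
    · have : 1 / (t - δ) < C := by nlinarith
      have := (one_div_lt ht hC0).1 this
      linarith
    · have a1 : (e / ρ) ^ 2 < C := by nlinarith
      have a2 : e ^ 2 / ρ ≤ (e / ρ) ^ 2 := by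
        rw [div_pow]
        gcongr
        nlinarith
      have a3 : e ^ 2 / ρ < C := by linarith
      have a4 : e ^ 2 / C < ρ := by
        rw [div_lt_iff₀ hρ] at a3
        rw [div_lt_iff₀ hC0]; linarith
      linarith
  have hF0 : 0 < F (T, x0) := by
    simp only [hF]; simp at hcon ⊢; linarith
  set K : Set (ℝ × ℝ) := Set.Icc (δ + 1 / C) T ×ˢ {x : ℝ | (L * (x - x0)) ^ 2 ≤ 1 - e ^ 2 / C} with hK
  have heC : 0 < e ^ 2 / C := by positivity
  have h1C : 0 < 1 / C := by positivity
  have hKc : IsCompact K := by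
    refine isCompact_Icc.prod ?_
    refine (isCompact_Icc (a := x0 - 1 / L) (b := x0 + 1 / L)).of_isClosed_subset
      (isClosed_le (by fun_prop) (by fun_prop)) ?_
    intro x hx
    have h3 : (L * (x - x0)) ^ 2 ≤ 1 := by
      have : (L * (x - x0)) ^ 2 ≤ 1 - e ^ 2 / C := hx
      linarith
    have h4 := abs_le.1 ((sq_le_one_iff_abs_le_one _).1 h3)
    have e1 : L * (1 / L) = 1 := by field_simp
    constructor
    · by_contra! h
      have := mul_lt_mul_of_pos_left h hL
      nlinarith
    · by_contra! h
      have := mul_lt_mul_of_pos_left h hL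
      nlinarith
  have hFc : ContinuousOn F K := by
    have hsub : K ⊆ Om := fun p hp => ⟨by have := hp.1.1; show 0 < p.1; linarith, trivial⟩
    refine (hV.dx.continuousOn.mono hsub).sub (ContinuousOn.add ?_ (ContinuousOn.mul
      (continuousOn_const.add (hV.continuousOn.mono hsub)) (ContinuousOn.pow ?_ 2)))
    · refine ContinuousOn.div (by fun_prop) (by fun_prop) ?_
      intro p hp
      have := hp.1.1
      have : 0 < p.1 - δ := by linarith
      exact this.ne'
    · refine ContinuousOn.div (by fun_prop) (by fun_prop) ?_
      intro p hp
      have : (L * (p.2 - x0)) ^ 2 ≤ 1 - e ^ 2 / C := hp.2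
      have : 0 < 1 - (L * (p.2 - x0)) ^ 2 := by linarith
      exact this.ne'
  have hmem : (T, x0) ∈ K := by
    have := claim T x0 hT le_rfl (by simp) hF0
    exact ⟨⟨this.1.le, le_rfl⟩, this.2.le⟩
  obtain ⟨⟨t, x⟩, hpK, hmax⟩ := hKc.exists_isMaxOn ⟨_, hmem⟩ hFc
  have hFp : 0 < F (t, x) := hF0.trans_le (hmax hmem)
  have k1 : δ + 1 / C ≤ t := hpK.1.1
  have k2 : t ≤ T := hpK.1.2
  have k3 : (L * (x - x0)) ^ 2 ≤ 1 - e ^ 2 / C := hpK.2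
  obtain ⟨s1, s2⟩ := claim t x (by linarith) k2 (by linarith) hFp
  have ht0 : 0 < t := by linarith
  have htδ : 0 < t - δ := by linarith
  have hnear : ∀ᶠ z in 𝓝 x, (L * (z - x0)) ^ 2 < 1 - e ^ 2 / C :=
    (show Continuous fun z => (L * (z - x0)) ^ 2 by fun_prop).continuousAt.eventually_lt
      continuousAt_const s2
  have hlm : IsLocalMax (fun z => F (t, z)) x := by
    filter_upwards [hnear] with z hz
    exact hmax (show (t, z) ∈ K from ⟨⟨k1, k2⟩, hz.le⟩)
  set h : ℝ → ℝ := fun z => (e / (1 - (L * (z - x0)) ^ 2)) ^ 2 with hh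
  set h1 : ℝ → ℝ := fun z => 4 * e ^ 2 * L * (L * (z - x0)) / (1 - (L * (z - x0)) ^ 2) ^ 3 with hh1
  set h2 : ℝ → ℝ := fun z => 24 * e ^ 2 * L ^ 2 * (L * (z - x0)) ^ 2 / (1 - (L * (z - x0)) ^ 2) ^ 4
        + 4 * e ^ 2 * L ^ 2 / (1 - (L * (z - x0)) ^ 2) ^ 3 with hh2
  have hρn : ∀ z, (L * (z - x0)) ^ 2 < 1 - e ^ 2 / C → 1 - (L * (z - x0)) ^ 2 ≠ 0 := by
    intro z hz
    have : 0 < 1 - (L * (z - x0)) ^ 2 := by linarith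
    exact this.ne'
  have hd1 : ∀ᶠ z in 𝓝 x, HasDerivAt (fun z => F (t, z))
      (DX (DX V) (t, z) - (DX V (t, z) * h z + (1 + V (t, z)) * h1 z)) z := by
    filter_upwards [hnear] with z hz
    exact (hV.dx.hx ht0 z).sub ((((hV.hx ht0 z).const_add 1).mul
      (barrier_deriv e L x0 z (hρn z hz))).const_add (1 / (t - δ)))
  have hd2 : HasDerivAt (fun z => DX (DX V) (t, z) - (DX V (t, z) * h z + (1 + V (t, z)) * h1 z))
      (DX (DX (DX V)) (t, x) - ((DX (DX V) (t, x) * h x + DX V (t, x) * h1 x) +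
        (DX V (t, x) * h1 x + (1 + V (t, x)) * h2 x))) x :=
    (hV.dx.dx.hx ht0 x).sub (((hV.dx.hx ht0 x).mul (barrier_deriv e L x0 x (hρn x s2))).add
      (((hV.hx ht0 x).const_add 1).mul (barrier_deriv2 e L x0 x (hρn x s2))))
  have c1 := hlm.hasDerivAt_eq_zero hd1.self_of_nhds
  have c2 := snd_test _ _ _ _ hlm hd1 hd2
  have hd3 : HasDerivAt (fun τ => F (τ, x))
      (DT (DX V) (t, x) - (-(1 / (t - δ)) ^ 2 + DT V (t, x) * h x)) t := by
    have g1 : HasDerivAt (fun τ : ℝ => 1 / (τ - δ)) (-(1 / (t - δ)) ^ 2) t := by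
      have := ((hasDerivAt_id t).sub_const δ).fun_inv htδ.ne'
      simp only [one_div]
      refine this.congr_deriv ?_
      simp
      try field_simp
    exact (hV.dx.ht ht0 x).sub (g1.add (((hV.ht ht0 x).const_add 1).mul_const (h x)))
  have c3 : (0 : ℝ) ≤ _ := fst_test _ _ _ (by
    have : ∀ᶠ z in 𝓝[<] t, δ + 1 / C < z := nhdsWithin_le_nhds (eventually_gt_nhds s1)
    filter_upwards [this, self_mem_nhdsWithin] with z hz1 hz2
    exact hmax (show (z, x) ∈ K from ⟨⟨hz1.le, (le_of_lt hz2).trans k2⟩, k3⟩)) hd3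
  rw [W_eq (m ^ 2) V hV hp hE t ht0 x, hE t ht0 x] at c3
  have hv := hp t ht0 x
  have hρ : 0 < 1 - (L * (x - x0)) ^ 2 := by linarith
  have hab : |L * (x - x0)| ≤ 1 := by
    rw [← sq_le_one_iff_abs_le_one]; linarith
  have hFp' : 1 / (t - δ) + (1 + V (t, x)) * h x < DX V (t, x) := by
    simp only [hF] at hFp
    simp only [hh]
    linarith
  have hρ1 : 1 - (L * (x - x0)) ^ 2 ≤ 1 := by nlinarith [sq_nonneg (L * (x - x0))]
  set ρ := 1 - (L * (x - x0)) ^ 2 with hρd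
  have b1 : |h1 x| ≤ κ * (e / ρ) ^ 3 := by
    simp only [hh1]
    rw [← hρd, abs_div, abs_mul, abs_of_pos (show 0 < 4 * e ^ 2 * L by positivity),
      abs_of_pos (show 0 < ρ ^ 3 by positivity), div_pow, ← mul_div_assoc]
    gcongr ?_ / _
    calc 4 * e ^ 2 * L * |L * (x - x0)| ≤ 4 * e ^ 2 * L * 1 := by gcongr
      _ ≤ e ^ 2 * (28 * L) := by nlinarith [show 0 < e ^ 2 * L by positivity]
      _ ≤ e ^ 2 * (κ * e) := by gcongr
      _ = κ * e ^ 3 := by ring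
  have b2 : |h2 x| ≤ κ * (e / ρ) ^ 4 := by
    simp only [hh2]
    rw [← hρd, abs_of_nonneg (by positivity)]
    have z1 : 24 * e ^ 2 * L ^ 2 * (L * (x - x0)) ^ 2 / ρ ^ 4 ≤ 24 * e ^ 2 * L ^ 2 * 1 / ρ ^ 4 := by
      gcongr; linarith
    have z2 : 4 * e ^ 2 * L ^ 2 / ρ ^ 3 ≤ 4 * e ^ 2 * L ^ 2 / ρ ^ 4 := by
      gcongr 4 * e ^ 2 * L ^ 2 / ?_
      exact pow_le_pow_of_le_one hρ.le hρ1 (by norm_num)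
    have z3 : 24 * e ^ 2 * L ^ 2 * 1 / ρ ^ 4 + 4 * e ^ 2 * L ^ 2 / ρ ^ 4 ≤ κ * (e / ρ) ^ 4 := by
      rw [← add_div, div_pow, ← mul_div_assoc]
      gcongr ?_ / _
      calc 24 * e ^ 2 * L ^ 2 * 1 + 4 * e ^ 2 * L ^ 2 = e ^ 2 * L * (28 * L) := by ring
        _ ≤ e ^ 2 * e * (κ * e) := by gcongr
        _ = κ * e ^ 4 := by ring
    linarith
  have hek : e ≤ e / ρ := by
    rw [le_div_iff₀ hρ]; nlinarith
  have fin := alg m (V (t, x)) (DX V (t, x)) (1 / (t - δ)) (e / ρ) e κ (h1 x) (h2 x) hm hv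
    (by positivity) he hek hκ hFp' b1 b2 hκ'
  have hhx : (e / ρ) ^ 2 = h x := rfl
  have c1' : DX (DX V) (t, x) = DX V (t, x) * h x + (1 + V (t, x)) * h1 x := by linarith
  have fin2 : m ^ 2 * DX V (t, x) ^ 2 * (e / ρ) ^ 2 / V (t, x)
      = m ^ 2 * DX V (t, x) ^ 2 / V (t, x) * h x := by rw [hhx]; ring
  rw [fin2] at fin
  have c3a : 2 * m ^ 2 * DX V (t, x) * DX (DX V) (t, x) / V (t, x) =
      2 * (m ^ 2 * DX V (t, x) ^ 2 / V (t, x) * h x)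
        + 2 * m ^ 2 * DX V (t, x) / V (t, x) * (1 + V (t, x)) * h1 x := by
    rw [c1']; ring
  have c3b : V (t, x) * DX (DX V) (t, x) = V (t, x) * DX V (t, x) * h x
      + V (t, x) * (1 + V (t, x)) * h1 x := by
    rw [c1']; ring
  rw [c3a, c3b] at c3
  linarith

lemma decay (q : ℝ) (hq1 : 1 < q) (f : ℝ → ℝ) (M t : ℝ) (ht : 0 < t) (hpos : ∀ x, 0 < f x)
    (hd : Differentiable ℝ f)
    (hx : ∀ x : ℝ, deriv (fun z => f z ^ (q - 1)) x ≤ 1 / t)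
    (hi : Integrable f) (hM : (∫ x, f x) = M) (x : ℝ) :
    f x ≤ (q * M / ((q - 1) * t)) ^ (1 / q) := by
  have hq : 0 < q - 1 := by linarith
  have hq0 : 0 < q := by linarith
  set r := 1 / (q - 1) with hr
  have hr0 : 0 < r := by positivity
  set v0 := f x ^ (q - 1) with hv0
  have hv0p : 0 < v0 := rpow_pos_of_pos (hpos x) _
  have hdv : Differentiable ℝ (fun z => f z ^ (q - 1)) := fun z =>
    (hd z).rpow_const (Or.inl (hpos z).ne')
  have hanti : Antitone (fun z => f z ^ (q - 1) - z / t) := by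
    apply antitone_of_deriv_nonpos
    · exact hdv.sub (differentiable_id.div_const t)
    · intro z
      have : HasDerivAt (fun z => f z ^ (q - 1) - z / t) _ z :=
        (hdv z).hasDerivAt.sub ((hasDerivAt_id z).div_const t)
      rw [this.deriv]
      linarith [hx z]
  have hab : x - t * v0 ≤ x := by nlinarith
  have hlow : ∀ z ∈ Set.Icc (x - t * v0) x, (z / t + (v0 - x / t)) ^ r ≤ f z := by
    intro z hz
    have h1 := hanti hz.2
    simp only at h1
    have h0 : 0 ≤ z / t + (v0 - x / t) := by
      have : z / t + (v0 - x / t) = (z - (x - t * v0)) / t := by field_simp; ring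
      rw [this]
      exact div_nonneg (by linarith [hz.1]) ht.le
    have h2 : f z = (f z ^ (q - 1)) ^ r := by
      rw [← rpow_mul (hpos z).le, hr, mul_one_div_cancel hq.ne', rpow_one]
    rw [h2]
    exact rpow_le_rpow h0 (by linarith) hr0.le
  have hint : ∫ z in (x - t * v0)..x, (z / t + (v0 - x / t)) ^ r = t * (v0 ^ (r + 1) / (r + 1)) := by
    rw [intervalIntegral.integral_comp_div_add (fun y => y ^ r) ht.ne',
      integral_rpow (Or.inl (by linarith))]
    have e1 : (x - t * v0) / t + (v0 - x / t) = 0 := by field_simp; ring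
    have e2 : x / t + (v0 - x / t) = v0 := by ring
    rw [e1, e2, zero_rpow (by linarith)]
    simp
  have hle : ∫ z in (x - t * v0)..x, (z / t + (v0 - x / t)) ^ r ≤ ∫ z in (x - t * v0)..x, f z := by
    apply intervalIntegral.integral_mono_on hab _ hi.intervalIntegrable hlow
    apply Continuous.intervalIntegrable
    exact (by fun_prop : Continuous fun z => z / t + (v0 - x / t)).rpow_const
      (fun _ => Or.inr hr0.le)
  have hle2 : ∫ z in (x - t * v0)..x, f z ≤ M := by
    rw [intervalIntegral.integral_of_le hab, ← hM]
    exact setIntegral_le_integral hi (Eventually.of_forall fun z => (hpos z).le)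
  have hfin : t * (v0 ^ (r + 1) / (r + 1)) ≤ M := by linarith
  have e3 : v0 ^ (r + 1) = f x ^ q := by
    rw [hv0, ← rpow_mul (hpos x).le]
    congr 1
    rw [hr]; field_simp; ring
  have e4 : r + 1 = q / (q - 1) := by rw [hr]; field_simp; ring
  rw [e3, e4] at hfin
  have hfq : f x ^ q ≤ q * M / ((q - 1) * t) := by
    rw [le_div_iff₀ (by positivity)]
    have : t * (f x ^ q / (q / (q - 1))) = f x ^ q * ((q - 1) * t) / q := by field_simp
    rw [this, div_le_iff₀ hq0] at hfin
    linarith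
  have : f x = (f x ^ q) ^ (1 / q) := by
    rw [← rpow_mul (hpos x).le, mul_one_div_cancel hq0.ne', rpow_one]
  rw [this]
  exact rpow_le_rpow (rpow_nonneg (hpos x).le _) hfq (by positivity)

/-- **entropy inequality and decay.** Let `1 < q < 2` and let `u` be a
smooth, strictly positive solution of `u_t - u_{xx} + (1/q)(u^q)_x = 0` on `ℝ × (0,∞)`.
Then `∂_x (u^{q-1})(x,t) ≤ 1/t` for all `x ∈ ℝ`, `t > 0`.  Consequently, if moreover
`u(·,t) ∈ L¹(ℝ)` with `∫ u(·,t) = M` for all `t > 0`, then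
`u(x,t) ≤ (qM/((q-1)t))^{1/q}` for all `x ∈ ℝ`, `t > 0`. -/
theorem stmt19 (q : ℝ) (hq1 : 1 < q) (hq2 : q < 2)
    (u : ℝ → ℝ → ℝ)
    (hsmooth : ContDiffOn ℝ (⊤ : ℕ∞) (fun p : ℝ × ℝ => u p.1 p.2) (Set.Ioi 0 ×ˢ Set.univ))
    (hpos : ∀ t : ℝ, 0 < t → ∀ x : ℝ, 0 < u t x)
    (hpde : ∀ t : ℝ, 0 < t → ∀ x : ℝ,
      HasDerivAt (fun τ => u τ x)
        (deriv (deriv (u t)) x - (1 / q) * deriv (fun z => u t z ^ q) x) t) :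
    (∀ t : ℝ, 0 < t → ∀ x : ℝ, deriv (fun z => u t z ^ (q - 1)) x ≤ 1 / t) ∧
      ∀ M : ℝ,
        (∀ t : ℝ, 0 < t → Integrable (u t) ∧ (∫ x, u t x) = M) →
        ∀ t : ℝ, 0 < t → ∀ x : ℝ,
          u t x ≤ (q * M / ((q - 1) * t)) ^ (1 / q) := by
  have hsm : Sm (fun p : ℝ × ℝ => u p.1 p.2) := hsmooth
  have first : ∀ t : ℝ, 0 < t → ∀ x : ℝ, deriv (fun z => u t z ^ (q - 1)) x ≤ 1 / t := by
    intro t ht x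
    obtain ⟨hV, hE⟩ := V_eq q hq1 u hsm hpos hpde _ rfl
    set V : ℝ × ℝ → ℝ := fun p => u p.1 p.2 ^ (q - 1) with hVd
    have hp : ∀ t : ℝ, 0 < t → ∀ x, 0 < V (t, x) := fun t ht x => rpow_pos_of_pos (hpos t ht x) _
    have ha : 0 < (2 - q) / (q - 1) := div_pos (by linarith) (by linarith)
    have hE' : ∀ t : ℝ, 0 < t → ∀ x : ℝ, DT V (t, x) = DX (DX V) (t, x)
        + √((2 - q) / (q - 1)) ^ 2 * DX V (t, x) ^ 2 / V (t, x) - V (t, x) * DX V (t, x) := by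
      rw [sq_sqrt ha.le]; exact hE
    have hk := key _ (sqrt_pos.2 ha) V hV hp hE'
    rw [show deriv (fun z => u t z ^ (q - 1)) x = DX V (t, x) from (hV.hx ht x).deriv]
    have hlim : Tendsto (fun e : ℝ => 1 / (t - e) + (1 + V (t, x)) * e ^ 2) (𝓝[>] 0) (𝓝 (1 / t)) := by
      have hc : ContinuousAt (fun e : ℝ => 1 / (t - e) + (1 + V (t, x)) * e ^ 2) 0 := by
        refine ContinuousAt.add (ContinuousAt.div (by fun_prop) (by fun_prop) ?_) (by fun_prop)
        simpa using ht.ne'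
      have := hc.tendsto.mono_left (nhdsWithin_le_nhds (s := Set.Ioi 0))
      simpa using this
    refine ge_of_tendsto hlim ?_
    filter_upwards [self_mem_nhdsWithin, nhdsWithin_le_nhds (eventually_lt_nhds ht)] with e he1 he2
    exact hk e t x e he1 he2 he1
  refine ⟨first, fun M hM t ht x => ?_⟩
  exact decay q hq1 (u t) M t ht (hpos t ht) (fun z => (hsm.hx ht z).differentiableAt)
    (first t ht) (hM t ht).1 (hM t ht).2 x
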